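/- Suppose t ≥ 2 and A_0, A_1, …, A_k are real symmetric matrices where each A_{j+1} is a 1-bordering of A_j. Suppose A_0 has exactly 2t−1 distinct eigenvalues with ordered multiplicity list (m_1, k, m_2, k, …, k, m_t) where m_j ≥ k ≥ t for each j, and A_k has exactly t distinct eigenvalues. Then for each j = 0, 1, …, k, the ordered multiplicity list of A_j equals (m_1 + j, k − j, m_2 + j, k − j, …, k − j, m_t + j) (where zero entries are omitted when j = k). -/

import Mathlib

/-!
For `i ≤ j` the matrix `A i` is a compression `Pᵀ (A j) P` of `A j`, and the proof combines two
consequences of Cauchy interlacing for compressions.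

*Location.* Each `μ i` has multiplicity at least `k` in `A 0`. Hence `A k` has an eigenvalue in each
of the `2t` intervals `(-∞, μ 0], [μ 0, μ 1], …, [μ (2t-2), ∞)`
(`IsCompression.exists_eigenvalue_le`, `IsCompression.exists_eigenvalue_between`,
`IsCompression.exists_eigenvalue_ge`): for a bounded interval, the sum of the two eigenspaces has
dimension at least `2k > k`, so it contains a nonzero vector on which `A 0` and `A k` act in the same
way, and at it the quadratic form of `(A k - μ i) (A k - μ (i+1))` is nonpositive. As `A k` has only
`t` eigenvalues, each of them lies in two adjacent intervals, which forces them to be the `μ i` with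
`i` even (`eq_even_of_hits`).

*Counting.* A multiplicity changes by at most the difference of the sizes
(`IsCompression.eigMult_le_left`, `IsCompression.eigMult_le_right`), and the multiplicities in a
symmetric matrix sum to its size (`sum_eigMult_eq_iff`). In `A k` the upper bounds (`+ k` at even
positions, `0` at odd ones) have the sum `n + k`, so they are attained. For `A j`, the lower bounds
coming from `A k` at even positions and from `A 0` at odd positions have the sum `n + j`, the size of
`A j`; so they are attained too, and there is no room for further eigenvalues.
-/

open Matrix

/-- The multiplicity of `t` as an eigenvalue of the matrix `A`. -/
noncomputable def eigMult {n : ℕ} (A : Matrix (Fin n) (Fin n) ℝ) (t : ℝ) : ℕ :=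
  Module.finrank ℝ (LinearMap.ker (Matrix.toLin' (A - t • (1 : Matrix (Fin n) (Fin n) ℝ))))

/-! ### Eigenvalue multiplicities of symmetric matrices -/

/-- A real symmetric matrix is diagonalized by an orthogonal matrix. -/
lemma exists_diag {N : ℕ} {B : Matrix (Fin N) (Fin N) ℝ} (hB : B.IsSymm) :
    ∃ (U : Matrix (Fin N) (Fin N) ℝ) (d : Fin N → ℝ), U * Uᵀ = 1 ∧ Uᵀ * U = 1 ∧
      B = U * diagonal d * Uᵀ ∧ spectrum ℝ B = Set.range d := by
  have hH : B.IsHermitian := by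
    rw [Matrix.IsHermitian, conjTranspose_eq_transpose_of_trivial]; exact hB
  have hstar : star (hH.eigenvectorUnitary : Matrix (Fin N) (Fin N) ℝ) =
      (hH.eigenvectorUnitary : Matrix (Fin N) (Fin N) ℝ)ᵀ := by
    rw [star_eq_conjTranspose, conjTranspose_eq_transpose_of_trivial]
  refine ⟨hH.eigenvectorUnitary, hH.eigenvalues, ?_, ?_, ?_, ?_⟩
  · rw [← hstar]; exact Unitary.coe_mul_star_self _
  · rw [← hstar]; exact Unitary.coe_star_mul_self _
  · have := hH.spectral_theorem
    rw [Unitary.conjStarAlgAut_apply, hstar] at this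
    exact this
  · exact hH.spectrum_real_eq_range_eigenvalues

lemma eigMult_eq_card {N : ℕ} {U : Matrix (Fin N) (Fin N) ℝ} {d : Fin N → ℝ}
    (h1 : U * Uᵀ = 1) (h2 : Uᵀ * U = 1) (x : ℝ) :
    eigMult (U * diagonal d * Uᵀ) x = (Finset.univ.filter fun i => d i = x).card := by
  have hsub : U * diagonal d * Uᵀ - x • (1 : Matrix (Fin N) (Fin N) ℝ) =
      U * diagonal (fun i => d i - x) * Uᵀ := by
    have : diagonal (fun i => d i - x) = diagonal d - x • (1 : Matrix (Fin N) (Fin N) ℝ) := by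
      rw [smul_one_eq_diagonal, diagonal_sub]
    rw [this, mul_sub, sub_mul, mul_smul_comm, mul_one, smul_mul_assoc, h1]
  have hU : IsUnit U.det := by
    rw [← isUnit_iff_isUnit_det]; exact ⟨⟨U, Uᵀ, h1, h2⟩, rfl⟩
  have hUt : IsUnit Uᵀ.det := by rwa [det_transpose]
  have hr : (U * diagonal (fun i => d i - x) * Uᵀ).rank =
      Fintype.card {i // d i - x ≠ 0} := by
    rw [rank_mul_eq_left_of_isUnit_det _ _ hUt, rank_mul_eq_right_of_isUnit_det _ _ hU,
      rank_diagonal]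
  have hrn := LinearMap.finrank_range_add_finrank_ker
    (Matrix.toLin' (U * diagonal (fun i => d i - x) * Uᵀ))
  rw [eigMult, hsub]
  rw [Matrix.rank, ← Matrix.toLin'_apply'] at hr
  rw [hr, Module.finrank_fin_fun, Fintype.card_subtype] at hrn
  have hc := Finset.card_filter_add_card_filter_not (s := (Finset.univ : Finset (Fin N)))
    (fun i => d i = x)
  simp only [sub_ne_zero, Finset.card_univ, Fintype.card_fin, ne_eq] at hrn hc
  omega

/-- The multiplicities of the members of `T` sum to the number of eigenvalues in `T`, counted with
multiplicity. -/
lemma sum_eigMult_diag {N : ℕ} {U : Matrix (Fin N) (Fin N) ℝ} {d : Fin N → ℝ}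
    (h1 : U * Uᵀ = 1) (h2 : Uᵀ * U = 1) (T : Finset ℝ) :
    ∑ x ∈ T, eigMult (U * diagonal d * Uᵀ) x = (Finset.univ.filter fun i => d i ∈ T).card := by
  rw [Finset.card_eq_sum_card_fiberwise (f := d) (t := T)
    (fun i hi => by simpa using hi)]
  refine Finset.sum_congr rfl fun x hx => ?_
  rw [eigMult_eq_card h1 h2, Finset.filter_filter]
  congr 1
  ext i
  simp only [Finset.mem_filter, Finset.mem_univ, true_and]
  exact ⟨fun h => ⟨h ▸ hx, h⟩, fun h => h.2⟩

lemma sum_eigMult_le {N : ℕ} {B : Matrix (Fin N) (Fin N) ℝ} (hB : B.IsSymm) (T : Finset ℝ) :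
    ∑ x ∈ T, eigMult B x ≤ N := by
  obtain ⟨U, d, h1, h2, rfl, -⟩ := exists_diag hB
  rw [sum_eigMult_diag h1 h2]
  exact (Finset.card_le_univ _).trans (by simp)

lemma sum_eigMult_eq_iff {N : ℕ} {B : Matrix (Fin N) (Fin N) ℝ} (hB : B.IsSymm)
    (T : Finset ℝ) : ∑ x ∈ T, eigMult B x = N ↔ spectrum ℝ B ⊆ T := by
  obtain ⟨U, d, h1, h2, rfl, hs⟩ := exists_diag hB
  rw [sum_eigMult_diag h1 h2, hs]
  have : (Finset.univ.filter fun i => d i ∈ T).card = N ↔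
      (Finset.univ.filter fun i => d i ∈ T) = Finset.univ := by
    rw [← Finset.card_eq_iff_eq_univ, Fintype.card_fin]
  rw [this, Finset.filter_eq_self]
  simp [Set.range_subset_iff]

lemma eigMult_eq_zero {N : ℕ} {B : Matrix (Fin N) (Fin N) ℝ} (hB : B.IsSymm) {x : ℝ}
    (hx : x ∉ spectrum ℝ B) : eigMult B x = 0 := by
  obtain ⟨U, d, h1, h2, rfl, hs⟩ := exists_diag hB
  rw [eigMult_eq_card h1 h2, Finset.card_eq_zero, Finset.filter_eq_empty_iff]
  rintro i - rfl
  exact hx (hs ▸ Set.mem_range_self i)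

lemma spectrum_finite {N : ℕ} {B : Matrix (Fin N) (Fin N) ℝ} (hB : B.IsSymm) :
    (spectrum ℝ B).Finite := by
  obtain ⟨U, d, h1, h2, rfl, hs⟩ := exists_diag hB
  exact hs ▸ Set.finite_range d

/-- A quadratic polynomial in `B` whose quadratic form is nonpositive at some nonzero vector takes a
nonpositive value at some eigenvalue of `B`. -/
lemma exists_eigenvalue_quad_nonpos {N : ℕ} {B : Matrix (Fin N) (Fin N) ℝ} (hB : B.IsSymm)
    (α β γ : ℝ) {w : Fin N → ℝ} (hw : w ≠ 0)
    (h : α * (w ⬝ᵥ w) + β * (w ⬝ᵥ B *ᵥ w) + γ * (B *ᵥ w ⬝ᵥ B *ᵥ w) ≤ 0) :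
    ∃ x ∈ spectrum ℝ B, α + β * x + γ * x ^ 2 ≤ 0 := by
  obtain ⟨U, d, h1, h2, rfl, hs⟩ := exists_diag hB
  by_contra! hcon
  rw [hs] at hcon
  -- `v` is the coordinate vector of `w` in the eigenbasis.
  obtain ⟨v, rfl⟩ : ∃ v, U *ᵥ v = w := ⟨Uᵀ *ᵥ w, by rw [mulVec_mulVec, h1, one_mulVec]⟩
  have hdot : ∀ a b : Fin N → ℝ, U *ᵥ a ⬝ᵥ U *ᵥ b = a ⬝ᵥ b := fun a b => by
    rw [dotProduct_mulVec, vecMul_mulVec, ← dotProduct_mulVec, h2, one_mulVec]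
  have hBv : (U * diagonal d * Uᵀ) *ᵥ U *ᵥ v = U *ᵥ (diagonal d *ᵥ v) := by
    rw [mulVec_mulVec, mul_assoc, mul_assoc, h2, mul_one, ← mulVec_mulVec]
  rw [hBv, hdot, hdot, hdot] at h
  have hsum : ∑ i, (α + β * d i + γ * d i ^ 2) * v i ^ 2 ≤ 0 := by
    refine le_of_eq_of_le ?_ h
    simp only [dotProduct, mulVec_diagonal, Finset.mul_sum, ← Finset.sum_add_distrib]
    exact Finset.sum_congr rfl fun i _ => by ring
  have hpos : ∀ i, 0 < α + β * d i + γ * d i ^ 2 := fun i => hcon _ (Set.mem_range_self i)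
  have hz := (Finset.sum_eq_zero_iff_of_nonneg
    (fun i _ => mul_nonneg (hpos i).le (sq_nonneg (v i)))).1
    (le_antisymm hsum (Finset.sum_nonneg fun i _ => mul_nonneg (hpos i).le (sq_nonneg (v i))))
  apply hw
  have : v = 0 := by
    funext i
    simpa [(hpos i).ne'] using hz i (Finset.mem_univ i)
  rw [this, mulVec_zero]

/-! ### Compressions and interlacing -/

/-- `A` is the compression of `B` to a subspace: `A = Pᵀ B P`, where the columns of `P` are
orthonormal. Principal submatrices are compressions, and compressions compose. -/
def IsCompression {a b : ℕ} (A : Matrix (Fin a) (Fin a) ℝ) (B : Matrix (Fin b) (Fin b) ℝ) : Prop :=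
  ∃ P : Matrix (Fin b) (Fin a) ℝ, Pᵀ * P = 1 ∧ Pᵀ * B * P = A

lemma IsCompression.refl {a : ℕ} (A : Matrix (Fin a) (Fin a) ℝ) : IsCompression A A :=
  ⟨1, by simp, by simp⟩

lemma IsCompression.trans {a b c : ℕ} {A : Matrix (Fin a) (Fin a) ℝ}
    {B : Matrix (Fin b) (Fin b) ℝ} {C : Matrix (Fin c) (Fin c) ℝ}
    (h : IsCompression A B) (h' : IsCompression B C) : IsCompression A C := by
  obtain ⟨P, hP, rfl⟩ := h
  obtain ⟨Q, hQ, rfl⟩ := h'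
  refine ⟨Q * P, ?_, ?_⟩
  · rw [transpose_mul, Matrix.mul_assoc, ← Matrix.mul_assoc Qᵀ, hQ, Matrix.one_mul, hP]
  · simp only [transpose_mul, Matrix.mul_assoc]

lemma IsCompression.of_submatrix {a b : ℕ} {A : Matrix (Fin a) (Fin a) ℝ}
    {B : Matrix (Fin b) (Fin b) ℝ} {e : Fin a → Fin b} (he : Function.Injective e)
    (h : ∀ i i', B (e i) (e i') = A i i') : IsCompression A B := by
  refine ⟨(1 : Matrix (Fin b) (Fin b) ℝ).submatrix id e, ?_, ?_⟩
  · ext i i'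
    simp [mul_apply, one_apply, he.eq_iff]
  · ext i i'
    simp [mul_apply, one_apply, h]

section Compression

variable {a b : ℕ} {A : Matrix (Fin a) (Fin a) ℝ} {B : Matrix (Fin b) (Fin b) ℝ}
  {P : Matrix (Fin b) (Fin a) ℝ}

lemma mulVec_injective_of_isometry (hP : Pᵀ * P = 1) : Function.Injective P.mulVecLin :=
  fun v w h => by
    have := congrArg (fun u => Pᵀ *ᵥ u) h
    simpa [mulVec_mulVec, hP] using this

lemma finrank_range_of_isometry (hP : Pᵀ * P = 1) :
    Module.finrank ℝ (LinearMap.range P.mulVecLin) = a := by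
  rw [LinearMap.finrank_range_of_inj (mulVec_injective_of_isometry hP), Module.finrank_fin_fun]

/-- The vectors of `W` which `B P` sends into the range of `P` form a subspace whose codimension
in `W` is at most the codimension of that range. -/
lemma finrank_le_inf_comap (hP : Pᵀ * P = 1) (W : Submodule ℝ (Fin a → ℝ)) :
    Module.finrank ℝ W + a ≤ Module.finrank ℝ
      ↥(W ⊓ (LinearMap.range P.mulVecLin).comap (B * P).mulVecLin) + b := by
  set R := LinearMap.range P.mulVecLin with hR
  set C := R.comap (B * P).mulVecLin with hC
  have hker : C = LinearMap.ker (R.mkQ ∘ₗ (B * P).mulVecLin) := by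
    rw [LinearMap.ker_comp, Submodule.ker_mkQ]
  have h1 := LinearMap.finrank_range_add_finrank_ker (R.mkQ ∘ₗ (B * P).mulVecLin)
  have h2 := Submodule.finrank_le (LinearMap.range (R.mkQ ∘ₗ (B * P).mulVecLin))
  have h3 := R.finrank_quotient_add_finrank
  have h4 := Submodule.finrank_sup_add_finrank_inf_eq W C
  have h5 := Submodule.finrank_le (W ⊔ C)
  rw [← hker] at h1
  rw [finrank_range_of_isometry hP] at h3
  simp only [Module.finrank_fin_fun] at h1 h3 h5
  omega

lemma mem_ker_sub_iff {N : ℕ} {M : Matrix (Fin N) (Fin N) ℝ} {x : ℝ} {v : Fin N → ℝ} :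
    v ∈ LinearMap.ker (Matrix.toLin' (M - x • (1 : Matrix (Fin N) (Fin N) ℝ))) ↔
      M *ᵥ v = x • v := by
  rw [LinearMap.mem_ker, toLin'_apply, sub_mulVec, smul_mulVec, one_mulVec, sub_eq_zero]

/-- If `B P` sends `w` into the range of `P`, then `P` intertwines `A` and `B` at `w`. -/
lemma intertwine (hP : Pᵀ * P = 1) (hA : Pᵀ * B * P = A) {w : Fin a → ℝ}
    (hw : w ∈ (LinearMap.range P.mulVecLin).comap (B * P).mulVecLin) :
    B *ᵥ P *ᵥ w = P *ᵥ A *ᵥ w := by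
  obtain ⟨z, hz⟩ := hw
  simp only [mulVecLin_apply] at hz
  have : A *ᵥ w = z := by
    rw [← hA, Matrix.mul_assoc, ← mulVec_mulVec, ← hz, mulVec_mulVec, hP, one_mulVec]
  rw [this, hz, mulVec_mulVec]

lemma dot_isometry (hP : Pᵀ * P = 1) (v w : Fin a → ℝ) : P *ᵥ v ⬝ᵥ P *ᵥ w = v ⬝ᵥ w := by
  rw [dotProduct_mulVec, vecMul_mulVec, ← dotProduct_mulVec, hP, one_mulVec]

lemma dot_compression (hA : Pᵀ * B * P = A) (w : Fin a → ℝ) :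
    P *ᵥ w ⬝ᵥ B *ᵥ P *ᵥ w = w ⬝ᵥ A *ᵥ w := by
  rw [← hA, dotProduct_comm, dotProduct_mulVec, ← mulVec_transpose, dotProduct_comm]
  simp only [mulVec_mulVec, Matrix.mul_assoc]

end Compression

/-- Half of Cauchy interlacing: passing from `A` to `B` lowers a multiplicity by at most the
difference of the sizes. -/
lemma IsCompression.eigMult_le_left {a b : ℕ} {A : Matrix (Fin a) (Fin a) ℝ}
    {B : Matrix (Fin b) (Fin b) ℝ} (h : IsCompression A B) (x : ℝ) :
    eigMult A x + a ≤ eigMult B x + b := by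
  obtain ⟨P, hP, hA⟩ := h
  have h1 := finrank_le_inf_comap (B := B) hP
    (LinearMap.ker (Matrix.toLin' (A - x • (1 : Matrix (Fin a) (Fin a) ℝ))))
  refine h1.trans (Nat.add_le_add_right ?_ _)
  rw [(Submodule.equivMapOfInjective _ (mulVec_injective_of_isometry hP) _).finrank_eq]
  refine Submodule.finrank_mono ?_
  rintro _ ⟨w, ⟨hw1, hw2⟩, rfl⟩
  rw [SetLike.mem_coe, mem_ker_sub_iff] at hw1
  rw [mem_ker_sub_iff, mulVecLin_apply, intertwine hP hA hw2, hw1, mulVec_smul]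

/-- The other half of Cauchy interlacing: passing from `A` to `B` raises a multiplicity by at most
the difference of the sizes. -/
lemma IsCompression.eigMult_le_right {a b : ℕ} {A : Matrix (Fin a) (Fin a) ℝ}
    {B : Matrix (Fin b) (Fin b) ℝ} (h : IsCompression A B) (x : ℝ) :
    eigMult B x + a ≤ eigMult A x + b := by
  obtain ⟨P, hP, hA⟩ := h
  set K := LinearMap.ker (Matrix.toLin' (B - x • (1 : Matrix (Fin b) (Fin b) ℝ))) with hK
  set R := LinearMap.range P.mulVecLin with hR
  have h4 := Submodule.finrank_sup_add_finrank_inf_eq K R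
  have h5 := Submodule.finrank_le (K ⊔ R)
  have h6 : Module.finrank ℝ ↥(K ⊓ R) ≤ eigMult A x := by
    rw [eigMult, (Submodule.equivMapOfInjective _ (mulVec_injective_of_isometry hP) _).finrank_eq]
    refine Submodule.finrank_mono ?_
    rintro _ ⟨hw, w, rfl⟩
    refine ⟨w, ?_, rfl⟩
    rw [SetLike.mem_coe, mem_ker_sub_iff, mulVecLin_apply] at hw
    rw [SetLike.mem_coe, mem_ker_sub_iff, ← hA, Matrix.mul_assoc, ← mulVec_mulVec, ← mulVec_mulVec, hw,
      mulVec_smul, mulVec_mulVec, hP, one_mulVec]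
  rw [finrank_range_of_isometry hP] at h4
  rw [Module.finrank_fin_fun] at h5
  have h7 : eigMult B x = Module.finrank ℝ K := rfl
  omega

lemma exists_eigenvector {a : ℕ} {A : Matrix (Fin a) (Fin a) ℝ} {x : ℝ} (h : 0 < eigMult A x) :
    ∃ w ≠ 0, A *ᵥ w = x • w := by
  obtain ⟨w, hw⟩ := Module.finrank_pos_iff_exists_ne_zero.1 h
  exact ⟨w, by simpa using hw, mem_ker_sub_iff.1 w.2⟩

lemma IsCompression.exists_eigenvalue_le {a b : ℕ} {A : Matrix (Fin a) (Fin a) ℝ}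
    {B : Matrix (Fin b) (Fin b) ℝ} (h : IsCompression A B) (hB : B.IsSymm) {x : ℝ}
    (hx : 0 < eigMult A x) : ∃ y ∈ spectrum ℝ B, y ≤ x := by
  obtain ⟨P, hP, hA⟩ := h
  obtain ⟨w, hw, hAw⟩ := exists_eigenvector hx
  obtain ⟨y, hy, hyx⟩ := exists_eigenvalue_quad_nonpos hB (-x) 1 0 (w := P *ᵥ w)
    (fun h0 => hw (mulVec_injective_of_isometry hP (by simpa using h0)))
    (by rw [dot_compression hA, dot_isometry hP, hAw, dotProduct_smul, smul_eq_mul]; linarith)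
  exact ⟨y, hy, by linarith⟩

lemma IsCompression.exists_eigenvalue_ge {a b : ℕ} {A : Matrix (Fin a) (Fin a) ℝ}
    {B : Matrix (Fin b) (Fin b) ℝ} (h : IsCompression A B) (hB : B.IsSymm) {x : ℝ}
    (hx : 0 < eigMult A x) : ∃ y ∈ spectrum ℝ B, x ≤ y := by
  obtain ⟨P, hP, hA⟩ := h
  obtain ⟨w, hw, hAw⟩ := exists_eigenvector hx
  obtain ⟨y, hy, hyx⟩ := exists_eigenvalue_quad_nonpos hB x (-1) 0 (w := P *ᵥ w)
    (fun h0 => hw (mulVec_injective_of_isometry hP (by simpa using h0)))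
    (by rw [dot_compression hA, dot_isometry hP, hAw, dotProduct_smul, smul_eq_mul]; linarith)
  exact ⟨y, hy, by linarith⟩

/-- If the total multiplicity of `x < y` in `A` exceeds the difference of the sizes, then `B` has
an eigenvalue in `[x, y]`: on a nonzero vector of the sum of the two eigenspaces at which `P`
intertwines `A` and `B`, the quadratic form of `(B - x) (B - y)` is nonpositive. -/
lemma IsCompression.exists_eigenvalue_between {a b : ℕ} {A : Matrix (Fin a) (Fin a) ℝ}
    {B : Matrix (Fin b) (Fin b) ℝ} (h : IsCompression A B) (hAs : A.IsSymm) (hB : B.IsSymm)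
    {x y : ℝ} (hxy : x < y) (hm : b < eigMult A x + eigMult A y + a) :
    ∃ z ∈ spectrum ℝ B, x ≤ z ∧ z ≤ y := by
  obtain ⟨P, hP, hA⟩ := h
  set X := LinearMap.ker (Matrix.toLin' (A - x • (1 : Matrix (Fin a) (Fin a) ℝ))) with hX
  set Y := LinearMap.ker (Matrix.toLin' (A - y • (1 : Matrix (Fin a) (Fin a) ℝ))) with hY
  have hdisj : X ⊓ Y = ⊥ := by
    rw [eq_bot_iff]
    rintro v ⟨h1, h2⟩
    rw [SetLike.mem_coe, mem_ker_sub_iff] at h1 h2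
    have : (y - x) • v = 0 := by rw [sub_smul, ← h1, ← h2, sub_self]
    simpa [sub_ne_zero.2 hxy.ne'] using this
  have hsum := Submodule.finrank_sup_add_finrank_inf_eq X Y
  rw [hdisj, finrank_bot] at hsum
  have hfr := finrank_le_inf_comap (B := B) hP (X ⊔ Y)
  have hpos : 0 < Module.finrank ℝ
      ↥((X ⊔ Y) ⊓ (LinearMap.range P.mulVecLin).comap (B * P).mulVecLin) := by
    have e1 : eigMult A x = Module.finrank ℝ X := rfl
    have e2 : eigMult A y = Module.finrank ℝ Y := rfl
    omega
  obtain ⟨⟨w, hwXY, hwR⟩, hw⟩ := Module.finrank_pos_iff_exists_ne_zero.1 hpos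
  have hw0 : w ≠ 0 := fun h0 => hw (Subtype.ext h0)
  have hBw := intertwine hP hA hwR
  obtain ⟨u, hu, v, hv, rfl⟩ := Submodule.mem_sup.1 hwXY
  rw [mem_ker_sub_iff] at hu hv
  have huv : u ⬝ᵥ v = 0 := by
    have h1 : A *ᵥ u ⬝ᵥ v = u ⬝ᵥ A *ᵥ v := by
      rw [dotProduct_mulVec, ← mulVec_transpose, hAs.eq]
    rw [hu, hv, smul_dotProduct, dotProduct_smul, smul_eq_mul, smul_eq_mul] at h1
    have : (y - x) * (u ⬝ᵥ v) = 0 := by linarith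
    exact (mul_eq_zero.1 this).resolve_left (sub_pos.2 hxy).ne'
  obtain ⟨z, hz, hzx⟩ := exists_eigenvalue_quad_nonpos hB (x * y) (-(x + y)) 1
    (w := P *ᵥ (u + v))
    (fun h0 => hw0 (mulVec_injective_of_isometry hP (by simpa using h0)))
    (by
      rw [dot_compression hA, hBw, dot_isometry hP, dot_isometry hP, mulVec_add, hu, hv]
      simp only [dotProduct_add, add_dotProduct, smul_dotProduct, dotProduct_smul, smul_eq_mul,
        dotProduct_comm v u, huv]
      apply le_of_eq
      ring)
  have hz' : (z - x) * (z - y) ≤ 0 := by linarith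
  refine ⟨z, hz, ?_, ?_⟩ <;> by_contra! hlt <;> nlinarith

/-! ### Combinatorics of the positions -/

/-- A set of `t` reals which has a point in each of the `2t` consecutive intervals
`(-∞, μ 0], [μ 0, μ 1], …, [μ (2t-2), ∞)` consists of the `μ i` with `i` even. The points chosen in
the intervals in odd positions, and those chosen in the intervals in even positions, both enumerate
the set increasingly; so the two enumerations agree, and a common point of two adjacent intervals
is their endpoint. -/
lemma eq_even_of_hits {t : ℕ} (μ : Fin (2 * t - 1) → ℝ) (hμ : StrictMono μ) (S : Finset ℝ)
    (hS : S.card = t)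
    (hl : ∀ i : Fin (2 * t - 1), i.val % 2 = 0 → ∃ x ∈ S, x ≤ μ i ∧ ∀ p < i, μ p ≤ x)
    (hr : ∀ i : Fin (2 * t - 1), i.val % 2 = 0 → ∃ x ∈ S, μ i ≤ x ∧ ∀ p > i, x ≤ μ p)
    (x : ℝ) (hx : x ∈ S) : ∃ i : Fin (2 * t - 1), i.val % 2 = 0 ∧ μ i = x := by
  let q : Fin t → Fin (2 * t - 1) := fun i => ⟨2 * i.val, by omega⟩
  have hq : ∀ i, (q i).val % 2 = 0 := fun i => by simp [q]
  choose f hfS hf1 hf2 using fun i => hl (q i) (hq i)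
  choose g hgS hg1 hg2 using fun i => hr (q i) (hq i)
  have hfm : StrictMono f := fun i i' hii => by
    have hv : i.val < i'.val := hii
    let p : Fin (2 * t - 1) := ⟨2 * i'.val - 1, by omega⟩
    have h1 : q i < p := Fin.mk_lt_mk.2 (by omega)
    have h2 : p < q i' := Fin.mk_lt_mk.2 (by omega)
    exact (hf1 i).trans_lt ((hμ h1).trans_le (hf2 i' p h2))
  have hgm : StrictMono g := fun i i' hii => by
    have hv : i.val < i'.val := hii
    let p : Fin (2 * t - 1) := ⟨2 * i.val + 1, by omega⟩
    have h1 : q i < p := Fin.mk_lt_mk.2 (by omega)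
    have h2 : p < q i' := Fin.mk_lt_mk.2 (by omega)
    exact (hg2 i p h1).trans_lt ((hμ h2).trans_le (hg1 i'))
  have hf := Finset.orderEmbOfFin_unique hS hfS hfm
  have hg := Finset.orderEmbOfFin_unique hS hgS hgm
  have hx' : x ∈ Set.range (S.orderEmbOfFin hS) := by rwa [Finset.range_orderEmbOfFin]
  obtain ⟨i, rfl⟩ := hx'
  refine ⟨q i, hq i, le_antisymm ?_ ?_⟩
  · rw [← hg]; exact hg1 i
  · rw [← hf]; exact hf1 i

lemma sum_alternating {t : ℕ} (ht : 1 ≤ t) :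
    ∑ i : Fin (2 * t - 1), (if i.val % 2 = 0 then (1 : ℤ) else -1) = 1 := by
  rw [Fin.sum_univ_eq_sum_range (fun i => if i % 2 = 0 then (1 : ℤ) else -1)]
  obtain ⟨s, rfl⟩ := Nat.exists_eq_add_of_le' ht
  induction s with
  | zero => simp
  | succ s ih =>
    have e : 2 * (s + 1 + 1) - 1 = (2 * (s + 1) - 1) + 1 + 1 := by omega
    have o1 : (2 * (s + 1) - 1) % 2 = 1 := by omega
    have o2 : (2 * (s + 1) - 1 + 1) % 2 = 0 := by omega
    rw [e, Finset.sum_range_succ, Finset.sum_range_succ, ih (by omega), o1, o2]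
    norm_num

/-! ### The multiplicity lists -/

/-- Suppose `t ≥ 2`, `k ≥ t`, and `A 0, A 1, …, A k` are symmetric matrices in which each
`A (j+1)` is a `1`-bordering of `A j`.  Suppose `A 0` has exactly `2t - 1` distinct
eigenvalues `μ 0 < μ 1 < ⋯`, with ordered multiplicity list
`(m 0, k, m 1, k, …, k, m (t-1))` where each `m i ≥ k`, and `A k` has exactly `t`
distinct eigenvalues.  Then for every `j`, the eigenvalues of `A j` lie among the `μ i`'s,
with ordered multiplicity list `(m 0 + j, k - j, m 1 + j, k - j, …, k - j, m (t-1) + j)`. -/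
theorem stmt15 {n t k : ℕ} (ht : 2 ≤ t) (hkt : t ≤ k)
    (A : ∀ j : Fin (k + 1), Matrix (Fin (n + j.val)) (Fin (n + j.val)) ℝ)
    (hsymm : ∀ j, (A j).IsSymm)
    (hbord : ∀ j : Fin k, ∀ i i' : Fin (n + j.val),
      A j.succ ⟨i.val + 1, Nat.succ_lt_succ i.isLt⟩ ⟨i'.val + 1, Nat.succ_lt_succ i'.isLt⟩ =
        A j.castSucc i i')
    (μ : Fin (2 * t - 1) → ℝ) (hμ : StrictMono μ)
    (hspec0 : spectrum ℝ (A 0) = Set.range μ)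
    (m : Fin t → ℕ) (hm : ∀ i, k ≤ m i)
    (hmult0 : ∀ i : Fin (2 * t - 1),
      eigMult (A 0) (μ i) =
        if i.val % 2 = 0 then m ⟨i.val / 2, by have := i.isLt; omega⟩ else k)
    (hlast : (spectrum ℝ (A (Fin.last k))).ncard = t) :
    ∀ j : Fin (k + 1),
      (∀ i : Fin (2 * t - 1),
        eigMult (A j) (μ i) =
          if i.val % 2 = 0 then m ⟨i.val / 2, by have := i.isLt; omega⟩ + j.val
          else k - j.val) ∧
      spectrum ℝ (A j) ⊆ Set.range μ := by
  have hz : ((0 : Fin (k + 1)) : ℕ) = 0 := rfl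
  have hlv : ((Fin.last k : Fin (k + 1)) : ℕ) = k := rfl
  have hstep : ∀ j : Fin k, IsCompression (A j.castSucc) (A j.succ) := fun j =>
    IsCompression.of_submatrix
      (e := fun i : Fin (n + j.val) => ⟨i.val + 1, Nat.succ_lt_succ i.isLt⟩)
      (fun i i' h => by simpa [Fin.ext_iff] using h) (hbord j)
  have hfrom : ∀ j, IsCompression (A 0) (A j) := fun j =>
    Fin.induction (motive := fun j => IsCompression (A 0) (A j)) (IsCompression.refl _)
      (fun i ih => ih.trans (hstep i)) j
  have hto : ∀ j, IsCompression (A j) (A (Fin.last k)) := fun j =>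
    Fin.reverseInduction (motive := fun j => IsCompression (A j) (A (Fin.last k)))
      (IsCompression.refl _) (fun i ih => (hstep i).trans ih) j
  have hk0 : ∀ i, k ≤ eigMult (A 0) (μ i) := fun i => by
    rw [hmult0]
    split_ifs
    · exact hm _
    · exact le_rfl
  have hpos0 : ∀ i, 0 < eigMult (A 0) (μ i) := fun i => by have := hk0 i; omega
  have hbetween : ∀ i i', i < i' → ∃ x ∈ spectrum ℝ (A (Fin.last k)), μ i ≤ x ∧ x ≤ μ i' :=
    fun i i' hii => (hfrom (Fin.last k)).exists_eigenvalue_between (hsymm 0) (hsymm _) (hμ hii)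
      (by have := hk0 i; have := hk0 i'; omega)
  have hfin := spectrum_finite (hsymm (Fin.last k))
  -- The eigenvalues of the last matrix are among the `μ i` with `i` even.
  have heven : ∀ x ∈ spectrum ℝ (A (Fin.last k)),
      ∃ i : Fin (2 * t - 1), i.val % 2 = 0 ∧ μ i = x := by
    intro x hx
    refine eq_even_of_hits μ hμ hfin.toFinset
      (by rw [← Set.ncard_eq_toFinset_card _ hfin, hlast]) ?_ ?_ x (hfin.mem_toFinset.2 hx)
    · intro i _
      simp only [hfin.mem_toFinset]
      by_cases h0 : i.val = 0
      · obtain ⟨y, hy, hyi⟩ := (hfrom (Fin.last k)).exists_eigenvalue_le (hsymm _) (hpos0 i)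
        exact ⟨y, hy, hyi, fun p hp => absurd (Fin.lt_def.1 hp) (by omega)⟩
      · let p : Fin (2 * t - 1) := ⟨i.val - 1, by omega⟩
        obtain ⟨y, hy, h1, h2⟩ := hbetween p i (Fin.lt_def.2 (by simp only [p]; omega))
        refine ⟨y, hy, h2, fun p' hp' => (hμ.monotone ?_).trans h1⟩
        have := Fin.lt_def.1 hp'
        exact Fin.le_def.2 (by simp only [p]; omega)
    · intro i _
      simp only [hfin.mem_toFinset]
      by_cases h0 : i.val + 1 = 2 * t - 1
      · obtain ⟨y, hy, hyi⟩ := (hfrom (Fin.last k)).exists_eigenvalue_ge (hsymm _) (hpos0 i)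
        exact ⟨y, hy, hyi, fun p hp => absurd (Fin.lt_def.1 hp) (by omega)⟩
      · let p : Fin (2 * t - 1) := ⟨i.val + 1, by omega⟩
        obtain ⟨y, hy, h1, h2⟩ := hbetween i p (Fin.lt_def.2 (by simp only [p]; omega))
        refine ⟨y, hy, h1, fun p' hp' => h2.trans (hμ.monotone ?_)⟩
        have := Fin.lt_def.1 hp'
        exact Fin.le_def.2 (by simp only [p]; omega)
  have hT : ∀ j, ∑ x ∈ Finset.univ.image μ, eigMult (A j) x = ∑ i, eigMult (A j) (μ i) :=
    fun j => Finset.sum_image fun i _ i' _ h => hμ.injective h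
  have hTc : ((Finset.univ.image μ : Finset ℝ) : Set ℝ) = Set.range μ := by simp
  have hsum0 : ∑ i, eigMult (A 0) (μ i) = n := by
    rw [← hT]
    exact (sum_eigMult_eq_iff (hsymm 0) _).2 (by rw [hTc, hspec0])
  have hsumk : ∑ i, eigMult (A (Fin.last k)) (μ i) = n + k := by
    rw [← hT]
    refine (sum_eigMult_eq_iff (hsymm _) _).2 ?_
    rw [hTc]
    intro x hx
    obtain ⟨i, -, rfl⟩ := heven x hx
    exact Set.mem_range_self i
  -- `ε i` is the change in the multiplicity of `μ i` at each bordering.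
  let ε : Fin (2 * t - 1) → ℤ := fun i => if i.val % 2 = 0 then 1 else -1
  have hε : ∑ i, ε i = 1 := sum_alternating (by omega)
  have hval : ∀ j : ℤ, ∑ i, ((eigMult (A 0) (μ i) : ℤ) + j * ε i) = n + j := fun j => by
    rw [Finset.sum_add_distrib, ← Finset.mul_sum, hε, mul_one, ← Nat.cast_sum, hsum0]
  have hlastmult : ∀ i, (eigMult (A (Fin.last k)) (μ i) : ℤ) = eigMult (A 0) (μ i) + k * ε i := by
    have hle : ∀ i ∈ Finset.univ, (eigMult (A (Fin.last k)) (μ i) : ℤ) ≤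
        eigMult (A 0) (μ i) + k * ε i := by
      intro i _
      by_cases hi : i.val % 2 = 0
      · have := (hfrom (Fin.last k)).eigMult_le_right (μ i)
        simp only [ε, hi, if_true]
        omega
      · have hns : μ i ∉ spectrum ℝ (A (Fin.last k)) := fun hmem => by
          obtain ⟨i', hi', he⟩ := heven _ hmem
          exact hi (hμ.injective he ▸ hi')
        rw [eigMult_eq_zero (hsymm _) hns, hmult0]
        simp [ε, hi]
    have := (Finset.sum_eq_sum_iff_of_le hle).1
      (by rw [hval, ← Nat.cast_sum, hsumk]; push_cast; rfl)
    exact fun i => this i (Finset.mem_univ i)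
  intro j
  have hjk : j.val ≤ k := Nat.lt_succ_iff.1 j.isLt
  have hge : ∀ i ∈ Finset.univ, (eigMult (A 0) (μ i) : ℤ) + (j.val : ℤ) * ε i ≤
      eigMult (A j) (μ i) := by
    intro i _
    have hL := hlastmult i
    by_cases hi : i.val % 2 = 0
    · have := (hto j).eigMult_le_right (μ i)
      simp only [ε, hi, if_true] at hL ⊢
      omega
    · have := (hfrom j).eigMult_le_left (μ i)
      simp only [ε, hi, if_false]
      omega
  have hsumle : ∑ i, eigMult (A j) (μ i) ≤ n + j.val := by
    rw [← hT]
    exact sum_eigMult_le (hsymm j) _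
  have hsumge := Finset.sum_le_sum hge
  rw [hval, ← Nat.cast_sum] at hsumge
  have hsumj : ∑ i, eigMult (A j) (μ i) = n + j.val := by omega
  have heq := (Finset.sum_eq_sum_iff_of_le hge).1
    (by rw [hval, ← Nat.cast_sum, hsumj]; push_cast; rfl)
  refine ⟨fun i => ?_, ?_⟩
  · have h1 := heq i (Finset.mem_univ i)
    have h2 := hmult0 i
    by_cases hi : i.val % 2 = 0
    · simp only [ε, hi, if_true] at h1 h2 ⊢
      omega
    · simp only [ε, hi, if_false] at h1 h2 ⊢
      omega
  · rw [← hTc]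
    exact (sum_eigMult_eq_iff (hsymm j) _).1 (by rw [hT, hsumj])
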